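/- Let a > 0 and ε > 0. There exists a constant C > 0 (depending only on a and ε) such that for all t > 0 and all θ ≠ 0, |∫_{−∞}^{∞} e^{iθξ} e^{−(ξ² − 2aξ²/√(ξ²+ε)) t} dξ| ≤ C θ^{−2} √t (1 + t) e^{a²t}. -/

import Mathlib

/-!
Two integrations by parts move two derivatives from the oscillating factor `e^{iθξ}` to
`f = e^{-φt}`, where `φ(ξ) = ξ² - 2aξ²/√(ξ²+ε)`, at the cost of a factor `θ⁻²`
(`norm_fourier_le_of_second_deriv`). It remains to bound the `L¹` norm of
`f'' = (φ'² t² - φ'' t) f`.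

With `D = |ξ| - a` one has `φ ≥ D² - a²`, `|φ'| ≤ 2|D| + 6a` and `|φ''| ≤ 2 + 10a/√ε`.
Half of the Gaussian decay `e^{-tD²}` absorbs `D²`, since `D² e^{-tD²} ≤ (2/t) e^{-tD²/2}`, so that
`|f''| ≤ t (K + 72a²t) e^{a²t} e^{-tD²/2}` with `K` depending on `a`, `ε` only. As `e^{-tD²/2}` is
dominated by a sum of two Gaussians of total mass `2√(2π/t)`, the bound follows.
-/

open MeasureTheory Real

/-- Integrating by parts twice against `e^{iθx}` gains the factor `θ⁻²`. -/
lemma norm_fourier_le_of_second_deriv (f f' f'' : ℝ → ℝ) (θ : ℝ) (hθ : θ ≠ 0)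
    (h1 : ∀ x, HasDerivAt f (f' x) x) (h2 : ∀ x, HasDerivAt f' (f'' x) x)
    (i0 : Integrable f) (i1 : Integrable f') (i2 : Integrable f'') :
    ‖∫ x : ℝ, Complex.exp (Complex.I * (θ : ℂ) * (x : ℂ)) * (f x : ℂ)‖ ≤
      (θ ^ 2)⁻¹ * ∫ x, |f'' x| := by
  set e : ℝ → ℂ := fun x => Complex.exp (Complex.I * (θ : ℂ) * (x : ℂ)) with he
  have hnorm : ∀ x, ‖e x‖ = 1 := by
    intro x
    have : Complex.I * (θ : ℂ) * (x : ℂ) = ((θ * x : ℝ) : ℂ) * Complex.I := by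
      push_cast; ring
    simp only [he]
    rw [this, Complex.norm_exp_ofReal_mul_I]
  have hcont : Continuous e := by
    simp only [he]; fun_prop
  have hde : ∀ x, HasDerivAt e (Complex.I * (θ : ℂ) * e x) x := by
    intro x
    have h := ((Complex.ofRealCLM.hasDerivAt (x := x)).const_mul (Complex.I * (θ : ℂ))).cexp
    refine h.congr_deriv ?_
    simp [he, mul_comm]
  have hint : ∀ g : ℝ → ℝ, Integrable g → Integrable (fun x => e x * (g x : ℂ)) := by
    intro g hg
    refine hg.ofReal.bdd_mul (c := 1) hcont.aestronglyMeasurable ?_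
    filter_upwards with x
    exact (hnorm x).le
  have step : ∀ g g' : ℝ → ℝ, (∀ x, HasDerivAt g (g' x) x) → Integrable g → Integrable g' →
      ∫ x, e x * (g' x : ℂ) = -(Complex.I * (θ : ℂ)) * ∫ x, e x * (g x : ℂ) := by
    intro g g' hg ig ig'
    have h := integral_mul_deriv_eq_deriv_mul_of_integrable (u := e)
      (v := fun x => (g x : ℂ)) (u' := fun x => Complex.I * (θ : ℂ) * e x)
      (v' := fun x => (g' x : ℂ)) (fun x _ => hde x) (fun x _ => (hg x).ofReal_comp)
      (hint g' ig') (by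
        have := (hint g ig).const_mul (Complex.I * (θ : ℂ))
        refine this.congr (Filter.Eventually.of_forall fun x => ?_)
        simp [mul_assoc]) (hint g ig)
    rw [h, neg_mul, ← integral_const_mul]
    simp only [mul_assoc]
  have s1 := step f f' h1 i0 i1
  have s2 := step f' f'' h2 i1 i2
  rw [s1] at s2
  have key : ‖∫ x, e x * (f'' x : ℂ)‖ = θ ^ 2 * ‖∫ x, e x * (f x : ℂ)‖ := by
    rw [s2]
    simp only [norm_mul, norm_neg, Complex.norm_I, Complex.norm_real, Real.norm_eq_abs, one_mul]
    rw [← mul_assoc, abs_mul_abs_self, sq]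
  have hb : ‖∫ x, e x * (f'' x : ℂ)‖ ≤ ∫ x, |f'' x| := by
    refine (norm_integral_le_integral_norm _).trans (le_of_eq ?_)
    congr 1; ext x
    simp [hnorm x]
  have hp : 0 < θ ^ 2 := by positivity
  rw [key] at hb
  rw [inv_mul_eq_div, le_div_iff₀ hp]
  linarith

/-- The two-bump Gaussian `e^{-b(x-a)²} + e^{-b(x+a)²}`, a smooth majorant of
`e^{-b(|x|-a)²}` with explicit integral. -/
noncomputable def bumps (a b x : ℝ) : ℝ := exp (-b * (x - a) ^ 2) + exp (-b * (x + a) ^ 2)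

lemma bumps_integrable (a b : ℝ) (hb : 0 < b) : Integrable (bumps a b) := by
  have h := integrable_exp_neg_mul_sq hb
  exact (h.comp_sub_right a).add (h.comp_add_right a)

lemma bumps_integral (a b : ℝ) (hb : 0 < b) : ∫ x, bumps a b x = 2 * √(π / b) := by
  have h := integrable_exp_neg_mul_sq hb
  unfold bumps
  rw [integral_add (h.comp_sub_right a) (h.comp_add_right a),
    integral_sub_right_eq_self (fun x => exp (-b * x ^ 2)) a,
    integral_add_right_eq_self (fun x => exp (-b * x ^ 2)) a, integral_gaussian]
  ring

lemma exp_abs_le_bumps (a b x : ℝ) : exp (-b * (|x| - a) ^ 2) ≤ bumps a b x := by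
  unfold bumps
  have p1 := exp_pos (-b * (x - a) ^ 2)
  have p2 := exp_pos (-b * (x + a) ^ 2)
  rcases abs_cases x with ⟨h, _⟩ | ⟨h, _⟩
  · rw [h]; linarith
  · rw [h, show (-x - a) ^ 2 = (x + a) ^ 2 by ring]; linarith

/-- `1/√(x²+ε)`, in terms of which all derivatives of the phase are polynomial. -/
noncomputable def invRoot (ε x : ℝ) : ℝ := (√(x ^ 2 + ε))⁻¹

lemma invRoot_pos (ε x : ℝ) (hε : 0 < ε) : 0 < invRoot ε x := by
  unfold invRoot; positivity

lemma invRoot_sq (ε x : ℝ) (hε : 0 < ε) : (x ^ 2 + ε) * invRoot ε x ^ 2 = 1 := by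
  unfold invRoot
  have h : 0 < x ^ 2 + ε := by positivity
  rw [inv_pow, Real.sq_sqrt h.le, mul_inv_cancel₀ h.ne']

lemma invRoot_hasDerivAt (ε x : ℝ) (hε : 0 < ε) :
    HasDerivAt (invRoot ε) (-x * invRoot ε x ^ 3) x := by
  have h : 0 < x ^ 2 + ε := by positivity
  have h1 : HasDerivAt (fun y : ℝ => y ^ 2 + ε) (2 * x) x := by
    simpa using (hasDerivAt_pow 2 x).add_const ε
  have h2 := (h1.sqrt h.ne').inv (by positivity)
  refine h2.congr_deriv ?_
  unfold invRoot
  have : √(x ^ 2 + ε) ≠ 0 := by positivity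
  field_simp

/-- The phase `φ(x) = x² - 2a x²/√(x²+ε)`. -/
noncomputable def phase (a ε x : ℝ) : ℝ := x ^ 2 - 2 * a * (x ^ 2 * invRoot ε x)

/-- The derivative of `phase`. -/
noncomputable def phase' (a ε x : ℝ) : ℝ :=
  2 * x - 2 * a * (x * invRoot ε x + ε * x * invRoot ε x ^ 3)

/-- The second derivative of `phase`. -/
noncomputable def phase'' (a ε x : ℝ) : ℝ :=
  2 - 2 * a * (2 * ε * invRoot ε x ^ 3 - 3 * ε * x ^ 2 * invRoot ε x ^ 5)

lemma phase_hasDerivAt (a ε x : ℝ) (hε : 0 < ε) :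
    HasDerivAt (phase a ε) (phase' a ε x) x := by
  have hr := invRoot_hasDerivAt ε x hε
  have hs := invRoot_sq ε x hε
  have h := (hasDerivAt_pow 2 x).sub (((hasDerivAt_pow 2 x).mul hr).const_mul (2 * a))
  refine h.congr_deriv ?_
  unfold phase'
  push_cast
  linear_combination (2 * a * x * invRoot ε x) * hs

lemma phase'_hasDerivAt (a ε x : ℝ) (hε : 0 < ε) :
    HasDerivAt (phase' a ε) (phase'' a ε x) x := by
  have hr := invRoot_hasDerivAt ε x hε
  have hs := invRoot_sq ε x hε
  have hi := hasDerivAt_id x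
  have h := (hi.const_mul 2).sub (((hi.mul hr).add ((hi.const_mul ε).mul (hr.pow 3))).const_mul
    (2 * a))
  refine h.congr_deriv ?_
  unfold phase''
  simp only [id, Pi.pow_apply]
  push_cast
  linear_combination (2 * a * invRoot ε x) * hs

lemma phase_lower (a ε x : ℝ) (ha : 0 < a) (hε : 0 < ε) :
    (|x| - a) ^ 2 - a ^ 2 ≤ phase a ε x := by
  have hr := invRoot_pos ε x hε
  have hs := invRoot_sq ε x hε
  have h1 : |x| * invRoot ε x ≤ 1 := by
    refine le_of_sq_le_sq ?_ one_pos.le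
    rw [mul_pow, sq_abs]
    nlinarith [mul_pos hε (pow_pos hr 2)]
  have h2 : x ^ 2 * invRoot ε x ≤ |x| := by
    rw [← sq_abs]
    nlinarith [abs_nonneg x]
  unfold phase
  nlinarith [sq_abs x]

lemma phase'_sq_le (a ε x : ℝ) (ha : 0 < a) (hε : 0 < ε) :
    phase' a ε x ^ 2 ≤ 8 * (|x| - a) ^ 2 + 72 * a ^ 2 := by
  have hr := invRoot_pos ε x hε
  have hs := invRoot_sq ε x hε
  have h0 : 0 ≤ ε * invRoot ε x ^ 2 := by positivity
  have h1 : (|x| * invRoot ε x) ^ 2 ≤ 1 := by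
    rw [mul_pow, sq_abs]; nlinarith
  have h1' : |x| * invRoot ε x ≤ 1 := le_of_sq_le_sq (by simpa using h1) one_pos.le
  have h2 : ε * invRoot ε x ^ 2 ≤ 1 := by nlinarith [sq_nonneg (x * invRoot ε x)]
  have h3 : |x * invRoot ε x + ε * x * invRoot ε x ^ 3| ≤ 2 := by
    have : x * invRoot ε x + ε * x * invRoot ε x ^ 3 =
        (x * invRoot ε x) * (1 + ε * invRoot ε x ^ 2) := by ring
    rw [this, abs_mul, abs_mul, abs_of_pos hr,
      abs_of_nonneg (by linarith : 0 ≤ 1 + ε * invRoot ε x ^ 2)]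
    have : 0 ≤ |x| * invRoot ε x := by positivity
    nlinarith
  have h4 : |phase' a ε x| ≤ 2 * |(|x| - a)| + 6 * a := by
    unfold phase'
    refine (abs_sub _ _).trans ?_
    rw [abs_mul, abs_mul (2 * a), abs_of_pos (by positivity : 0 < 2 * a), abs_two]
    have := le_abs_self (|x| - a)
    nlinarith
  rw [← sq_abs, ← sq_abs (|x| - a)]
  have := pow_le_pow_left₀ (abs_nonneg _) h4 2
  nlinarith [sq_nonneg (2 * |(|x| - a)| - 6 * a)]

lemma phase''_abs_le (a ε x : ℝ) (ha : 0 < a) (hε : 0 < ε) :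
    |phase'' a ε x| ≤ 2 + 10 * a * (√ε)⁻¹ := by
  have hr := invRoot_pos ε x hε
  have hs := invRoot_sq ε x hε
  have hle : invRoot ε x ≤ (√ε)⁻¹ := by
    unfold invRoot
    have : 0 < √ε := by positivity
    gcongr
    nlinarith [sq_nonneg x]
  set r := invRoot ε x
  set p := ε * r ^ 2 with hp
  set q := x ^ 2 * r ^ 2 with hq
  have hp0 : 0 ≤ p := by positivity
  have hq0 : 0 ≤ q := by positivity
  have hpq : q + p = 1 := by rw [← hs]; ring
  have e : phase'' a ε x = 2 - 2 * a * (r * (2 * p - 3 * (p * q))) := by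
    simp only [phase'', hp, hq]; ring
  have hpq1 : p * q ≤ 1 := by nlinarith
  have hpq0 : 0 ≤ p * q := by positivity
  have h5 : |r * (2 * p - 3 * (p * q))| ≤ 5 * (√ε)⁻¹ := by
    rw [abs_mul, abs_of_pos hr, mul_comm]
    have : |2 * p - 3 * (p * q)| ≤ 5 := by
      rw [abs_le]; constructor <;> linarith
    gcongr
  rw [e]
  refine (abs_sub _ _).trans ?_
  rw [abs_mul, abs_of_pos (by positivity : 0 < 2 * a), abs_two]
  nlinarith

lemma exp_phase_le (a ε t x : ℝ) (ha : 0 < a) (hε : 0 < ε) (ht : 0 < t) :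
    exp (-(phase a ε x * t)) ≤ exp (a ^ 2 * t) * bumps a (t / 2) x := by
  have h := phase_lower a ε x ha hε
  refine le_trans ?_ (mul_le_mul_of_nonneg_left (exp_abs_le_bumps a (t / 2) x) (exp_pos _).le)
  rw [← exp_add]
  apply exp_le_exp.mpr
  nlinarith [mul_le_mul_of_nonneg_right h ht.le, mul_nonneg ht.le (sq_nonneg (|x| - a))]

/-- Half of the Gaussian decay absorbs the quadratic growth of `φ'²`. -/
lemma phase'_sq_mul_exp_le (a ε t x : ℝ) (ha : 0 < a) (hε : 0 < ε) (ht : 0 < t) :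
    t * phase' a ε x ^ 2 * exp (-(phase a ε x * t)) ≤
      (16 + 72 * a ^ 2 * t) * (exp (a ^ 2 * t) * bumps a (t / 2) x) := by
  have h := phase_lower a ε x ha hε
  have h1 := phase'_sq_le a ε x ha hε
  have h2 := exp_phase_le a ε t x ha hε ht
  have hE := exp_pos (-(phase a ε x * t))
  have h3 : t / 2 * (|x| - a) ^ 2 * exp (-(phase a ε x * t)) ≤
      exp (a ^ 2 * t) * bumps a (t / 2) x := by
    refine le_trans ?_ (mul_le_mul_of_nonneg_left (exp_abs_le_bumps a (t / 2) x) (exp_pos _).le)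
    have h4 : t / 2 * (|x| - a) ^ 2 ≤ exp (t / 2 * (|x| - a) ^ 2) := by
      linarith [add_one_le_exp (t / 2 * (|x| - a) ^ 2)]
    refine (mul_le_mul_of_nonneg_right h4 hE.le).trans ?_
    rw [← exp_add, ← exp_add]
    apply exp_le_exp.mpr
    nlinarith [mul_le_mul_of_nonneg_right h ht.le]
  have h5 : t * phase' a ε x ^ 2 * exp (-(phase a ε x * t)) ≤
      t * (8 * (|x| - a) ^ 2 + 72 * a ^ 2) * exp (-(phase a ε x * t)) := by gcongr
  have h6 := mul_le_mul_of_nonneg_left h2 (by positivity : 0 ≤ 72 * a ^ 2 * t)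
  nlinarith

/-- For `a > 0` and `ε > 0` there exists `C > 0` (depending only on `a` and `ε`)
such that for all `t > 0` and all `θ ≠ 0`:
`|∫_ℝ e^{iθξ} e^{-(ξ² - 2aξ²/√(ξ²+ε)) t} dξ| ≤ C θ^{-2} √t (1 + t) e^{a²t}`. -/
theorem oscillatory_integral_bound_two (a ε : ℝ) (ha : 0 < a) (hε : 0 < ε) :
    ∃ C > 0, ∀ t : ℝ, 0 < t → ∀ θ : ℝ, θ ≠ 0 →
      ‖∫ ξ : ℝ, Complex.exp (Complex.I * (θ : ℂ) * (ξ : ℂ)) *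
          Complex.exp (-(((ξ ^ 2 - 2 * a * ξ ^ 2 / Real.sqrt (ξ ^ 2 + ε)) * t : ℝ) : ℂ))‖ ≤
        C * (θ ^ 2)⁻¹ * Real.sqrt t * (1 + t) * Real.exp (a ^ 2 * t) := by
  set K : ℝ := 2 + 10 * a * (√ε)⁻¹ with hK
  have hK0 : 0 < K := by positivity
  refine ⟨(16 + K + 72 * a ^ 2) * (2 * √(2 * π)), by positivity, fun t ht θ hθ => ?_⟩
  set f : ℝ → ℝ := fun x => exp (-(phase a ε x * t)) with hf
  set f' : ℝ → ℝ := fun x => -(phase' a ε x * t) * f x with hf'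
  set f'' : ℝ → ℝ := fun x => (t * (t * phase' a ε x ^ 2) - phase'' a ε x * t) * f x with hf''
  set G : ℝ → ℝ := fun x => exp (a ^ 2 * t) * bumps a (t / 2) x with hG
  have hGi : Integrable G := (bumps_integrable a (t / 2) (by positivity)).const_mul _
  have hGint : ∫ x, G x = exp (a ^ 2 * t) * (2 * √(π / (t / 2))) := by
    rw [hG, integral_const_mul, bumps_integral a (t / 2) (by positivity)]
  have hr : Continuous (invRoot ε) :=
    continuous_iff_continuousAt.mpr fun x => (invRoot_hasDerivAt ε x hε).continuousAt
  have c0 : Continuous (phase a ε) := by unfold phase; fun_prop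
  have c1 : Continuous (phase' a ε) := by unfold phase'; fun_prop
  have c2 : Continuous (phase'' a ε) := by unfold phase''; fun_prop
  have cf : Continuous f := by simp only [hf]; fun_prop
  have cf' : Continuous f' := by simp only [hf']; fun_prop
  have cf'' : Continuous f'' := by simp only [hf'']; fun_prop
  have d1 : ∀ x, HasDerivAt f (f' x) x := by
    intro x
    refine (((phase_hasDerivAt a ε x hε).mul_const t).neg.exp).congr_deriv ?_
    simp only [hf', hf, Pi.neg_apply]
    ring
  have d2 : ∀ x, HasDerivAt f' (f'' x) x := by
    intro x
    refine ((((phase'_hasDerivAt a ε x hε).mul_const t).neg).mul (d1 x)).congr_deriv ?_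
    simp only [hf', hf'', Pi.neg_apply]
    ring
  have f0 : ∀ x, 0 < f x := fun x => exp_pos _
  have b0 : ∀ x, f x ≤ G x := fun x => exp_phase_le a ε t x ha hε ht
  have b2 : ∀ x, t * phase' a ε x ^ 2 * f x ≤ (16 + 72 * a ^ 2 * t) * G x :=
    fun x => phase'_sq_mul_exp_le a ε t x ha hε ht
  have i0 : Integrable f := hGi.mono' cf.aestronglyMeasurable (Filter.Eventually.of_forall
    fun x => by rw [Real.norm_eq_abs, abs_of_pos (f0 x)]; exact b0 x)
  have i1 : Integrable f' := by
    refine (hGi.const_mul (t + (16 + 72 * a ^ 2 * t))).mono' cf'.aestronglyMeasurable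
      (Filter.Eventually.of_forall fun x => ?_)
    simp only [hf', Real.norm_eq_abs]
    rw [abs_mul, abs_neg, abs_mul, abs_of_pos ht, abs_of_pos (f0 x)]
    -- `|φ'| ≤ 1 + φ'²` reduces the first derivative to the two bounds already available.
    have h1 : |phase' a ε x| ≤ 1 + phase' a ε x ^ 2 := by
      rw [← sq_abs]; nlinarith [sq_nonneg (|phase' a ε x| - 1), abs_nonneg (phase' a ε x)]
    have h2 : |phase' a ε x| * t * f x ≤ (1 + phase' a ε x ^ 2) * t * f x := by
      have := (f0 x).le
      gcongr
    nlinarith [b2 x, mul_le_mul_of_nonneg_left (b0 x) ht.le]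
  have hb : ∀ x, |f'' x| ≤ t * (16 + K + 72 * a ^ 2 * t) * G x := by
    intro x
    simp only [hf'']
    rw [abs_mul, abs_of_pos (f0 x)]
    have h1 : |t * (t * phase' a ε x ^ 2) - phase'' a ε x * t| ≤
        t * (t * phase' a ε x ^ 2) + K * t := by
      refine (abs_sub _ _).trans ?_
      rw [abs_of_nonneg (by positivity : 0 ≤ t * (t * phase' a ε x ^ 2)), abs_mul, abs_of_pos ht]
      gcongr
      exact phase''_abs_le a ε x ha hε
    refine (mul_le_mul_of_nonneg_right h1 (f0 x).le).trans ?_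
    nlinarith [mul_le_mul_of_nonneg_left (b2 x) ht.le,
      mul_le_mul_of_nonneg_left (b0 x) (mul_pos hK0 ht).le]
  have hbi := hGi.const_mul (t * (16 + K + 72 * a ^ 2 * t))
  have i2 : Integrable f'' := hbi.mono' cf''.aestronglyMeasurable (Filter.Eventually.of_forall hb)
  have main := norm_fourier_le_of_second_deriv f f' f'' θ hθ d1 d2 i0 i1 i2
  have hI : ∫ x, |f'' x| ≤
      t * (16 + K + 72 * a ^ 2 * t) * (exp (a ^ 2 * t) * (2 * √(π / (t / 2)))) := by
    rw [← hGint, ← integral_const_mul]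
    exact integral_mono i2.abs hbi hb
  have hsqrt : t * √(π / (t / 2)) = √(2 * π) * √t := by
    rw [show π / (t / 2) = 2 * π / t by field_simp, Real.sqrt_div (by positivity)]
    have h0 : √t ≠ 0 := by positivity
    field_simp
    rw [Real.sq_sqrt ht.le]
  have heq : ∀ ξ : ℝ, Complex.exp (-(((ξ ^ 2 - 2 * a * ξ ^ 2 / √(ξ ^ 2 + ε)) * t : ℝ) : ℂ)) =
      (f ξ : ℂ) := by
    intro ξ
    have : (ξ ^ 2 - 2 * a * ξ ^ 2 / √(ξ ^ 2 + ε)) = phase a ε ξ := by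
      unfold phase invRoot; ring
    rw [this]
    simp [hf]
  simp only [heq]
  refine main.trans ?_
  calc (θ ^ 2)⁻¹ * ∫ x, |f'' x|
      ≤ (θ ^ 2)⁻¹ *
        (t * (16 + K + 72 * a ^ 2 * t) * (exp (a ^ 2 * t) * (2 * √(π / (t / 2))))) := by gcongr
    _ = (θ ^ 2)⁻¹ *
        ((16 + K + 72 * a ^ 2 * t) * (exp (a ^ 2 * t) * (2 * (t * √(π / (t / 2)))))) := by ring
    _ = (16 + K + 72 * a ^ 2 * t) *
        ((θ ^ 2)⁻¹ * (exp (a ^ 2 * t) * (2 * (√(2 * π) * √t)))) := by rw [hsqrt]; ring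
    _ ≤ ((16 + K + 72 * a ^ 2) * (1 + t)) *
        ((θ ^ 2)⁻¹ * (exp (a ^ 2 * t) * (2 * (√(2 * π) * √t)))) := by
        gcongr
        nlinarith [sq_nonneg a, mul_pos hK0 ht]
    _ = _ := by ring
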